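/- Let η = 231. For each x ∈ [1/2, 1), limₙ (1/n)·log P(Aₙ ≥ nx) = −(x log x + (1−x)log(1−x) + log 2), and for each x ∈ (0, 1/2], limₙ (1/n)·log P(Aₙ ≤ nx) = −(x log x + (1−x)log(1−x) + log 2), where P is the uniform measure on 231-avoiding permutations of [n] and Aₙ is the longest alternating subsequence length. -/

import Mathlib

/-!
Splitting a 231-avoiding permutation at its maximum puts smaller values to the left and larger
values to the right, so the 231-avoiding permutations of `[n]` correspond to the binary trees with
`n` nodes (`word`, `word_injective`, `exists_word_eq`). The interior peaks of the permutation are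
the nodes of the tree with two children (`peaks_word`). Deleting entries creates no peaks, so if
there are `k` such nodes, then an alternating subsequence has length at most `2 * k + 3`; taking
all peaks, a valley between any two neighbours and one entry on either side gives one of length
`2 * k + 1` (`altLen_bounds`).

The number of binary trees with `N + 1` nodes, `k` of them branching, is
`N.choose (2 * k) * 2 ^ (N - 2 * k) * catalan k` (`coeff_branchPoly_succ`). This follows by
induction on the recursion at the root, from the Catalan recursion and a Vandermonde convolution.
Since `catalan k` is `4 ^ k` up to a polynomial factor, the count is
`2 ^ N * N.choose (2 * k)` up to a polynomial factor, and dividing by `catalan (N + 1)`, which is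
`4 ^ N` up to a polynomial factor, shows that the branching statistic behaves like a Binomial
`(N, 1 / 2)` variable `2 * k`. The upper bound for the tail is then the Chernoff bound
(`sum_coeff_le`); the lower bound keeps a single term with `2 * k` close to `N * x` and estimates
the binomial coefficient by Stirling's formula (`tendsto_log_choose`).
-/
open Equiv Filter Real Set

def Contains {n m : ℕ} (σ : Equiv.Perm (Fin n)) (η : Equiv.Perm (Fin m)) : Prop :=
  ∃ f : Fin m → Fin n, StrictMono f ∧ ∀ j k, σ (f j) < σ (f k) ↔ η j < η k

def Avoids {n m : ℕ} (σ : Equiv.Perm (Fin n)) (η : Equiv.Perm (Fin m)) : Prop := ¬ Contains σ η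

def Avoids231 {n : ℕ} (σ : Equiv.Perm (Fin n)) : Prop :=
  ¬ ∃ i₁ i₂ i₃ : Fin n, i₁ < i₂ ∧ i₂ < i₃ ∧ σ i₃ < σ i₁ ∧ σ i₁ < σ i₂

def Avoids132 {n : ℕ} (σ : Equiv.Perm (Fin n)) : Prop :=
  ¬ ∃ i₁ i₂ i₃ : Fin n, i₁ < i₂ ∧ i₂ < i₃ ∧ σ i₁ < σ i₃ ∧ σ i₃ < σ i₂

def Avoids213 {n : ℕ} (σ : Equiv.Perm (Fin n)) : Prop :=
  ¬ ∃ i₁ i₂ i₃ : Fin n, i₁ < i₂ ∧ i₂ < i₃ ∧ σ i₂ < σ i₁ ∧ σ i₁ < σ i₃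

def Avoids312 {n : ℕ} (σ : Equiv.Perm (Fin n)) : Prop :=
  ¬ ∃ i₁ i₂ i₃ : Fin n, i₁ < i₂ ∧ i₂ < i₃ ∧ σ i₂ < σ i₃ ∧ σ i₃ < σ i₁

/-- `f` indexes an alternating subsequence of `σ`. -/
def IsAltSub {n k : ℕ} (σ : Equiv.Perm (Fin n)) (f : Fin k → Fin n) : Prop :=
  StrictMono f ∧ ∀ (j : ℕ) (h : j + 2 < k),
    (σ (f ⟨j, by omega⟩) < σ (f ⟨j + 1, by omega⟩) ↔
      ¬ σ (f ⟨j + 1, by omega⟩) < σ (f ⟨j + 2, by omega⟩))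

/-- The length of the longest alternating subsequence. -/
noncomputable def altLen {n : ℕ} (σ : Equiv.Perm (Fin n)) : ℕ :=
  sSup {k | ∃ f : Fin k → Fin n, IsAltSub σ f}

/-- `f` indexes an alternating subsequence beginning with an ascent and ending with a descent. -/
def IsAltPM {n k : ℕ} (σ : Equiv.Perm (Fin n)) (f : Fin k → Fin n) : Prop :=
  IsAltSub σ f ∧ 3 ≤ k ∧ Odd k ∧
    (∀ (h : 3 ≤ k), σ (f ⟨0, by omega⟩) < σ (f ⟨1, by omega⟩)) ∧
    (∀ (h : 3 ≤ k), σ (f ⟨k - 1, by omega⟩) < σ (f ⟨k - 2, by omega⟩))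

/-- The length `A^{+,-}` of the longest alternating subsequence beginning with an ascent and
ending with a descent; `1` if there is no such subsequence, and `0` when `n = 0`. -/
noncomputable def apm {n : ℕ} (σ : Equiv.Perm (Fin n)) : ℕ :=
  if n = 0 then 0 else max (sSup {k | ∃ f : Fin k → Fin n, IsAltPM σ f}) 1

/-- The length of the longest increasing subsequence. -/
noncomputable def lisLen {n : ℕ} (σ : Equiv.Perm (Fin n)) : ℕ :=
  sSup {k | ∃ f : Fin k → Fin n, StrictMono f ∧ StrictMono (⇑σ ∘ f)}

open scoped Classical in
/-- The moment generating function of `A_n` under the uniform 231-avoiding measure. -/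
noncomputable def Malt (n : ℕ) (lam : ℝ) : ℝ :=
  (∑ σ ∈ Finset.univ.filter (fun σ : Equiv.Perm (Fin n) => Avoids231 σ),
    Real.exp (lam * altLen σ)) / (catalan n)

open scoped Classical in
noncomputable def Mapm (n : ℕ) (lam : ℝ) : ℝ :=
  (∑ σ ∈ Finset.univ.filter (fun σ : Equiv.Perm (Fin n) => Avoids231 σ),
    Real.exp (lam * apm σ)) / (catalan n)

open scoped Classical in
noncomputable def Minc (n : ℕ) (lam : ℝ) : ℝ :=
  (∑ σ ∈ Finset.univ.filter (fun σ : Equiv.Perm (Fin n) => Avoids231 σ),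
    Real.exp (lam * lisLen σ)) / (catalan n)

/-! ### Binary trees by number of branching nodes -/

/-- The number of nodes of a binary tree that have two (nonempty) children. -/
def branch : BinaryTree Unit → ℕ
  | .nil => 0
  | .node _ l r => branch l + branch r + (if l = .nil ∨ r = .nil then 0 else 1)

/-- A Vandermonde-type convolution with the summation in the upper indices. -/
lemma sum_choose_mul_choose (a b n : ℕ) :
    ∑ ij ∈ Finset.HasAntidiagonal.antidiagonal n, ij.1.choose a * ij.2.choose b =
      (n + 1).choose (a + b + 1) := by
  induction n generalizing b with
  | zero => cases a <;> cases b <;> simp <;> rw [Nat.choose_eq_zero_of_lt (by omega)]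
  | succ n ih =>
    rw [Finset.Nat.antidiagonal_succ']
    cases b with
    | zero =>
      have := ih 0
      simp only [Nat.choose_zero_right, mul_one, add_zero] at this
      simp [this, Nat.choose_succ_succ (n + 1) a]
    | succ b =>
      have h1 := ih b
      have h2 := ih (b + 1)
      rw [Finset.sum_cons, Finset.sum_map, Nat.choose_zero_succ, mul_zero, zero_add]
      calc _ = ∑ ij ∈ Finset.HasAntidiagonal.antidiagonal n,
            (ij.1.choose a * ij.2.choose b + ij.1.choose a * ij.2.choose (b + 1)) :=
            Finset.sum_congr rfl fun ij _ => by
              rw [← mul_add, ← Nat.choose_succ_succ]; rfl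
        _ = _ := by
          rw [Finset.sum_add_distrib, h1, h2, ← add_assoc a b 1, ← Nat.choose_succ_succ]

open Polynomial in
/-- The generating polynomial of the binary trees with `n` nodes by number of branching nodes. -/
noncomputable def branchPoly (n : ℕ) : ℕ[X] :=
  ∑ t ∈ BinaryTree.treesOfNumNodesEq n, X ^ branch t

lemma coeff_branchPoly (n k : ℕ) : (branchPoly n).coeff k =
    ((BinaryTree.treesOfNumNodesEq n).filter (fun t => branch t = k)).card := by
  rw [branchPoly, Polynomial.finsetSum_coeff, Finset.card_filter]
  simp only [Polynomial.coeff_X_pow, eq_comm]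

open Polynomial in
lemma branchPoly_succ (n : ℕ) : branchPoly (n + 1) =
    ∑ ij ∈ Finset.HasAntidiagonal.antidiagonal n, branchPoly ij.1 * branchPoly ij.2 *
      (if ij.1 = 0 ∨ ij.2 = 0 then 1 else X) := by
  rw [branchPoly, BinaryTree.treesOfNumNodesEq_succ, Finset.sum_biUnion]
  · refine Finset.sum_congr rfl fun ij _ => ?_
    rw [BinaryTree.pairwiseNode, Finset.sum_map, Finset.sum_product, branchPoly, branchPoly,
      Finset.sum_mul_sum, Finset.sum_mul]
    refine Finset.sum_congr rfl fun s hs => ?_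
    rw [Finset.sum_mul]
    refine Finset.sum_congr rfl fun t ht => ?_
    rw [BinaryTree.mem_treesOfNumNodesEq] at hs ht
    have key : ∀ (u : BinaryTree Unit) (m : ℕ), u.numNodes = m → (u = .nil ↔ m = 0) := by
      rintro (_ | ⟨_, l, r⟩) m rfl <;> simp [BinaryTree.numNodes]
    change X ^ branch (.node () s t) = _
    simp only [branch, key s _ hs, key t _ ht]
    split_ifs <;> simp [pow_add]
  · intro ij _ kl _ hne
    rw [Function.onFun, Finset.disjoint_left]
    rintro t h1 h2
    simp only [BinaryTree.pairwiseNode, Finset.mem_map, Finset.mem_product,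
      BinaryTree.mem_treesOfNumNodesEq, Prod.exists] at h1 h2
    obtain ⟨a, b, ⟨ha, hb⟩, rfl⟩ := h1
    obtain ⟨c, d, ⟨hc, hd⟩, h⟩ := h2
    obtain ⟨-, rfl, rfl⟩ := BinaryTree.node.inj h
    exact hne (Prod.ext (ha.symm.trans hc) (hb.symm.trans hd))

/-- Multiplying by `4 ^ k` clears the truncated exponent in
`n.choose (2 * k) * 2 ^ (n - 2 * k) * catalan k`. -/
lemma coeff_branchPoly_succ (n k : ℕ) :
    (branchPoly (n + 1)).coeff k * 4 ^ k = n.choose (2 * k) * 2 ^ n * catalan k := by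
  have h0 : branchPoly 0 = 1 := by
    simp [branchPoly, branch]
  have h1 : branchPoly 1 = 1 := by
    rw [branchPoly_succ]; simp [h0]
  induction n using Nat.strong_induction_on generalizing k with
  | _ n ih =>
  match n with
  | 0 => cases k <;> simp [h1, Polynomial.coeff_one, Nat.choose_eq_zero_iff]
  | 1 =>
    have h2 : branchPoly 2 = 2 := by
      rw [branchPoly_succ, Finset.Nat.antidiagonal_succ]; simp [h0, h1]; norm_num
    rw [h2]
    cases k
    · simp
    · simp [Polynomial.coeff_ofNat_succ, Nat.choose_eq_zero_iff]; left; omega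
  | n + 2 =>
    have hrec : branchPoly (n + 3) = 2 * branchPoly (n + 2) + Polynomial.X *
        ∑ ij ∈ Finset.HasAntidiagonal.antidiagonal n,
          branchPoly (ij.1 + 1) * branchPoly (ij.2 + 1) := by
      rw [branchPoly_succ, Finset.Nat.antidiagonal_succ_succ', Finset.sum_cons, Finset.sum_cons,
        Finset.sum_map, Finset.mul_sum]
      simp [h0, mul_comm]
      ring
    have ih1 := ih (n + 1) (by omega)
    rw [hrec, Polynomial.coeff_add, show (2 : Polynomial ℕ) = Polynomial.C 2 from rfl,
      Polynomial.coeff_C_mul]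
    cases k with
    | zero =>
      have := ih1 0
      simp only [Polynomial.coeff_X_mul_zero, add_zero, pow_zero, mul_one, mul_zero,
        Nat.choose_zero_right, one_mul] at this ⊢
      rw [this]; ring
    | succ k =>
      have key : (∑ ij ∈ Finset.HasAntidiagonal.antidiagonal n,
            branchPoly (ij.1 + 1) * branchPoly (ij.2 + 1)).coeff k * 4 ^ k
          = (n + 1).choose (2 * k + 1) * 2 ^ n * catalan (k + 1) := by
        rw [Polynomial.finsetSum_coeff]
        simp only [Polynomial.coeff_mul]
        rw [Finset.sum_comm, catalan_succ', Finset.sum_mul, Finset.mul_sum]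
        refine Finset.sum_congr rfl fun ab hab => ?_
        rw [Finset.HasAntidiagonal.mem_antidiagonal] at hab
        have hc := sum_choose_mul_choose (2 * ab.1) (2 * ab.2) n
        rw [show 2 * ab.1 + 2 * ab.2 = 2 * k by omega] at hc
        rw [← hc, Finset.sum_mul, Finset.sum_mul, Finset.sum_mul]
        refine Finset.sum_congr rfl fun ij hij => ?_
        rw [Finset.HasAntidiagonal.mem_antidiagonal] at hij
        have e1 := ih ij.1 (by omega) ab.1
        have e2 := ih ij.2 (by omega) ab.2
        rw [← hab, pow_add, ← hij, pow_add]
        calc _ = ((branchPoly (ij.1 + 1)).coeff ab.1 * 4 ^ ab.1) *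
              ((branchPoly (ij.2 + 1)).coeff ab.2 * 4 ^ ab.2) := by ring
          _ = _ := by rw [e1, e2]; ring
      rw [Polynomial.coeff_X_mul]
      have e := ih1 (k + 1)
      calc _ = 2 * ((branchPoly (n + 1 + 1)).coeff (k + 1) * 4 ^ (k + 1)) +
            4 * ((∑ ij ∈ Finset.HasAntidiagonal.antidiagonal n,
              branchPoly (ij.1 + 1) * branchPoly (ij.2 + 1)).coeff k * 4 ^ k) := by ring
        _ = _ := by
          rw [e, key, show 2 * (k + 1) = 2 * k + 1 + 1 by ring,
            Nat.choose_succ_succ (n + 1) (2 * k + 1)]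
          ring

/-! ### Peaks and alternating sublists of lists -/

/-- The number of interior peaks of a list, i.e. of consecutive entries `a, b, c` with
`a < b > c`. -/
def peaks : List ℕ → ℕ
  | a :: b :: c :: l => (if a < b ∧ c < b then 1 else 0) + peaks (b :: c :: l)
  | _ => 0

lemma peaks_cons_cons_cons (a b c : ℕ) (l : List ℕ) :
    peaks (a :: b :: c :: l) = (if a < b ∧ c < b then 1 else 0) + peaks (b :: c :: l) := rfl

lemma peaks_max_cons (m : ℕ) (B : List ℕ) (hB : ∀ x ∈ B, x < m) : peaks (m :: B) = peaks B := by
  match B with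
  | [] => rfl
  | [b] => rfl
  | b :: c :: B =>
    have := hB b (by simp)
    rw [peaks_cons_cons_cons, if_neg (by omega), zero_add]

/-- An entry exceeding all others is a peak unless it is first or last. -/
lemma peaks_append_max (m : ℕ) (A B : List ℕ) (hA : ∀ x ∈ A, x < m) (hB : ∀ x ∈ B, x < m) :
    peaks (A ++ m :: B) = peaks A + peaks B + (if A = [] ∨ B = [] then 0 else 1) := by
  match A with
  | [] => simp [peaks_max_cons m B hB, peaks]
  | [a] =>
    have ha := hA a (by simp)
    match B with
    | [] => simp [peaks]
    | b :: B =>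
      have hb := hB b (by simp)
      have := peaks_max_cons m (b :: B) hB
      simp [peaks_cons_cons_cons, this, ha, hb]
      simp [peaks, add_comm]
  | [a, a'] =>
    have ha := hA a' (by simp)
    have ih := peaks_append_max m [a'] B (fun x hx => hA x (by simp_all)) hB
    simp only [List.cons_append, List.nil_append] at ih ⊢
    rw [peaks_cons_cons_cons, ih, if_neg (by omega)]
    simp [peaks]
  | a :: a' :: a'' :: A =>
    have ih := peaks_append_max m (a' :: a'' :: A) B (fun x hx => hA x (by simp_all)) hB
    simp only [List.cons_append] at ih ⊢
    rw [peaks_cons_cons_cons, ih, peaks_cons_cons_cons]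
    simp [add_assoc]

/-- Concatenation creates at most one peak: the two entries at the junction are not both peaks. -/
lemma peaks_append_le (A B : List ℕ) :
    peaks (A ++ B) ≤ peaks A + peaks B + (if A = [] ∨ B = [] then 0 else 1) := by
  match A with
  | [] => simp
  | [a] =>
    match B with
    | [] => simp
    | [b] => simp [peaks]
    | b :: c :: B =>
      simp [peaks_cons_cons_cons]
      split_ifs <;> omega
  | [a, a'] =>
    match B with
    | [] => simp
    | [b] =>
      simp [peaks]
      split_ifs <;> omega
    | b :: c :: B =>
      simp [peaks_cons_cons_cons]
      split_ifs <;> omega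
  | a :: a' :: a'' :: A =>
    have ih := peaks_append_le (a' :: a'' :: A) B
    simp only [List.cons_append] at ih ⊢
    rw [peaks_cons_cons_cons, peaks_cons_cons_cons]
    simp at ih ⊢
    omega

/-- Consecutive comparisons in the list have alternating directions. -/
def AltList : List ℕ → Prop
  | a :: b :: c :: l => (a < b ↔ ¬ b < c) ∧ AltList (b :: c :: l)
  | _ => True

lemma altList_cons_cons_cons (a b c : ℕ) (l : List ℕ) :
    AltList (a :: b :: c :: l) ↔ (a < b ↔ ¬ b < c) ∧ AltList (b :: c :: l) := Iff.rfl

lemma AltList.length_le_aux (a b : ℕ) (l : List ℕ) (h : AltList (a :: b :: l))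
    (hd : (a :: b :: l).Nodup) :
    (a :: b :: l).length ≤ 2 * peaks (a :: b :: l) + (if a < b then 2 else 3) := by
  match l with
  | [] => simp; split_ifs <;> omega
  | c :: l =>
    obtain ⟨h1, h2⟩ := h
    have ih := AltList.length_le_aux b c l h2 hd.of_cons
    have hbc : b ≠ c := fun h => by simp [h] at hd
    rw [peaks_cons_cons_cons]
    simp only [List.length_cons] at ih ⊢
    split_ifs at ih ⊢ <;> omega

lemma AltList.length_le {l : List ℕ} (h : AltList l) (hd : l.Nodup) :
    l.length ≤ 2 * peaks l + 3 := by
  match l with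
  | [] => simp
  | [a] => simp
  | a :: b :: l =>
    have := AltList.length_le_aux a b l h hd
    split_ifs at this <;> omega

/-- An alternating list that starts with an ascent and ends with a descent (or has length one). -/
def UpDown : List ℕ → Prop
  | [_] => True
  | a :: b :: c :: l => a < b ∧ c < b ∧ UpDown (c :: l)
  | _ => False

lemma UpDown.ne_nil {l : List ℕ} (h : UpDown l) : l ≠ [] := by
  rintro rfl; exact h

lemma UpDown.append {A B : List ℕ} {m : ℕ} (hA : UpDown A) (hB : UpDown B)
    (hAm : ∀ x ∈ A, x < m) (hBm : ∀ x ∈ B, x < m) : UpDown (A ++ m :: B) := by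
  match A with
  | [a] =>
    match B with
    | b :: B => exact ⟨hAm a (by simp), hBm b (by simp), hB⟩
  | a :: b :: c :: l =>
    exact ⟨hA.1, hA.2.1, UpDown.append (A := c :: l) hA.2.2 hB
      (fun x hx => hAm x (by simp_all)) hBm⟩

lemma UpDown.altList {l : List ℕ} (h : UpDown l) : AltList l := by
  match l with
  | [a] => trivial
  | [a, b, c] => exact ⟨iff_of_true h.1 (not_lt.2 h.2.1.le), trivial⟩
  | a :: b :: c :: d :: e :: l =>
    obtain ⟨h1, h2, h3⟩ := h
    refine ⟨iff_of_true h1 (not_lt.2 h2.le), iff_of_false (not_lt.2 h2.le) (not_not.2 h3.1), ?_⟩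
    exact UpDown.altList h3

/-! ### Reading a binary tree as a 231-avoiding list -/

open BinaryTree (numNodes)

/-- The 231-avoiding arrangement of `o, o + 1, …, o + t.numNodes - 1` whose largest entry is the
root of `t`, preceded by the left and followed by the right subtree. -/
def word : BinaryTree Unit → ℕ → List ℕ
  | .nil, _ => []
  | .node _ l r, o =>
    word l o ++ (o + l.numNodes + r.numNodes) :: word r (o + l.numNodes)

/-- 231-avoidance for lists. -/
def Av (l : List ℕ) : Prop :=
  ∀ a b c, [a, b, c].Sublist l → ¬ (c < a ∧ a < b)

lemma word_perm (t : BinaryTree Unit) (o : ℕ) : (word t o).Perm (List.range' o t.numNodes) := by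
  induction t generalizing o with
  | nil => simp [word, numNodes]
  | node _ l r ihl ihr =>
    have h1 := ihl o
    have h2 := ihr (o + l.numNodes)
    rw [word]
    refine List.perm_middle.trans ((List.Perm.cons _ (h1.append h2)).trans ?_)
    simp only [numNodes]
    rw [List.range'_append_1, List.range'_concat, one_mul, add_assoc o]
    exact (List.perm_append_comm (l₁ := [o + (l.numNodes + r.numNodes)])
      (l₂ := List.range' o (l.numNodes + r.numNodes)))

lemma mem_word {t : BinaryTree Unit} {o x : ℕ} : x ∈ word t o ↔ o ≤ x ∧ x < o + t.numNodes := by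
  rw [(word_perm t o).mem_iff, List.mem_range'_1]

lemma word_nodup (t : BinaryTree Unit) (o : ℕ) : (word t o).Nodup :=
  (word_perm t o).nodup_iff.2 List.nodup_range'

lemma word_eq_nil {t : BinaryTree Unit} {o : ℕ} : word t o = [] ↔ t = .nil := by
  cases t <;> simp [word]

lemma word_lt_left (l r : BinaryTree Unit) (o : ℕ) :
    ∀ x ∈ word l o, x < o + l.numNodes + r.numNodes := by
  intro x hx; rw [mem_word] at hx; omega

lemma word_lt_right (l r : BinaryTree Unit) (o : ℕ) :
    ∀ x ∈ word r (o + l.numNodes), x < o + l.numNodes + r.numNodes := by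
  intro x hx; rw [mem_word] at hx; omega

lemma peaks_word (t : BinaryTree Unit) (o : ℕ) : peaks (word t o) = branch t := by
  induction t generalizing o with
  | nil => simp [word, branch, peaks]
  | node _ l r ihl ihr =>
    rw [word, peaks_append_max _ _ _ (word_lt_left l r o) (word_lt_right l r o), ihl, ihr, branch]
    simp only [word_eq_nil]

/-- Deleting entries of `word t o` does not create peaks. -/
lemma peaks_le_of_sublist_word (t : BinaryTree Unit) (o : ℕ) (s : List ℕ)
    (hs : s.Sublist (word t o)) : peaks s ≤ branch t := by
  induction t generalizing o s with
  | nil => simp [word] at hs; simp [hs, peaks]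
  | node _ l r ihl ihr =>
    rw [word, List.sublist_append_iff] at hs
    obtain ⟨A, B, rfl, hA, hB⟩ := hs
    have hl := ihl o A hA
    have hAl : l = .nil → A = [] := by rintro rfl; simpa [word] using hA
    have nil_of (C : List ℕ) (hC : C.Sublist (word r (o + l.numNodes))) : r = .nil → C = [] := by
      rintro rfl; simpa [word] using hC
    rw [branch]
    rcases List.sublist_cons_iff.1 hB with hB | ⟨C, rfl, hC⟩
    · have := peaks_append_le A B
      have hr := ihr _ B hB
      have := nil_of B hB
      split_ifs at * <;> first | omega | tauto
    · have := peaks_append_max _ A C (fun x hx => word_lt_left l r o x (hA.subset hx))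
        (fun x hx => word_lt_right l r o x (hC.subset hx))
      have hr := ihr _ C hC
      have := nil_of C hC
      split_ifs at * <;> first | omega | tauto

lemma exists_upDown_sublist (t : BinaryTree Unit) (ht : t ≠ .nil) (o : ℕ) :
    ∃ s, s.Sublist (word t o) ∧ UpDown s ∧ s.length = 2 * branch t + 1 := by
  induction t generalizing o with
  | nil => exact absurd rfl ht
  | node _ l r ihl ihr =>
    by_cases hl : l = .nil
    · by_cases hr : r = .nil
      · subst hl hr
        exact ⟨[o], by simp [word, numNodes], trivial, by simp [branch]⟩
      · obtain ⟨s, h1, h2, h3⟩ := ihr hr (o + l.numNodes)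
        refine ⟨s, ?_, h2, by simp [h3, branch, hl]⟩
        exact h1.trans ((List.sublist_cons_self _ _).trans (List.sublist_append_right _ _))
    · obtain ⟨s, h1, h2, h3⟩ := ihl hl o
      by_cases hr : r = .nil
      · exact ⟨s, h1.trans (List.sublist_append_left _ _), h2, by simp [h3, branch, hr]⟩
      · obtain ⟨s', h1', h2', h3'⟩ := ihr hr (o + l.numNodes)
        refine ⟨s ++ (o + l.numNodes + r.numNodes) :: s', h1.append (h1'.cons_cons _), ?_, ?_⟩
        · exact h2.append h2' (fun x hx => word_lt_left l r o x (h1.subset hx))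
            (fun x hx => word_lt_right l r o x (h1'.subset hx))
        · simp [h3, h3', branch, hl, hr]; ring

lemma numNodes_eq_of_word_eq {t t' : BinaryTree Unit} {o o' : ℕ} (h : word t o = word t' o') :
    t.numNodes = t'.numNodes := by
  simpa [(word_perm _ _).length_eq] using congrArg List.length h

lemma word_injective (o : ℕ) : Function.Injective (fun t => word t o) := by
  intro t
  induction t generalizing o with
  | nil =>
    intro t' h
    exact (word_eq_nil.1 (h.symm : word t' o = [])).symm
  | node u l r ihl ihr =>
    rintro (_ | ⟨u', l', r'⟩) h
    · simp [word] at h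
    · have hn := numNodes_eq_of_word_eq h
      simp only [numNodes] at hn
      have hm : o + l.numNodes + r.numNodes = o + l'.numNodes + r'.numNodes := by omega
      simp only [word, hm] at h
      rw [List.append_cons_inj_of_notMem (fun hx => by rw [mem_word] at hx; omega)
        (fun hx => by rw [mem_word] at hx; omega)] at h
      obtain ⟨h1, -, h3⟩ := h
      rw [numNodes_eq_of_word_eq h1] at h3
      rw [ihl o h1, ihr _ h3]

lemma word_av (t : BinaryTree Unit) (o : ℕ) : Av (word t o) := by
  induction t generalizing o with
  | nil => intro a b c h; simp [word] at h
  | node _ l r ihl ihr =>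
    intro a b c h hlt
    rw [word] at h
    obtain ⟨A, B, hAB, hA, hB⟩ := List.sublist_append_iff.1 h
    have hAm : ∀ x ∈ A, x < o + l.numNodes := fun x hx => (mem_word.1 (hA.subset hx)).2
    have hBm : ∀ x ∈ B, o + l.numNodes ≤ x := fun x hx => by
      rcases List.mem_cons.1 (hB.subset hx) with rfl | hx
      · omega
      · exact (mem_word.1 hx).1
    match A with
    | [] =>
      rw [List.nil_append] at hAB
      subst hAB
      rcases List.sublist_cons_iff.1 hB with hB | ⟨C, hC, hB⟩
      · exact ihr _ a b c hB hlt
      · simp only [List.cons.injEq] at hC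
        obtain ⟨h1, rfl⟩ := hC
        have := word_lt_right l r o b (hB.subset (by simp))
        omega
    | [x] =>
      simp at hAB
      obtain ⟨rfl, rfl⟩ := hAB
      have := hAm a (by simp)
      have := hBm c (by simp)
      omega
    | [x, y] =>
      simp at hAB
      obtain ⟨rfl, rfl, rfl⟩ := hAB
      have := hAm a (by simp)
      have := hBm c (by simp)
      omega
    | x :: y :: z :: A =>
      simp at hAB
      obtain ⟨rfl, rfl, rfl, rfl, rfl⟩ := hAB
      exact ihl _ a b c hA hlt

lemma perm_range'_of_append_lt {A B : List ℕ} {o n : ℕ} (h : (A ++ B).Perm (List.range' o n))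
    (hlt : ∀ x ∈ A, ∀ y ∈ B, x < y) :
    A.Perm (List.range' o A.length) ∧ B.Perm (List.range' (o + A.length) B.length) := by
  have hn : A.length + B.length = n := by simpa using h.length_eq
  have hA := List.mergeSort_perm A (· ≤ ·)
  have hB := List.mergeSort_perm B (· ≤ ·)
  have hs : (A.mergeSort (· ≤ ·) ++ B.mergeSort (· ≤ ·)).Pairwise (· ≤ ·) := by
    rw [List.pairwise_append]
    refine ⟨List.pairwise_mergeSort' _ _, List.pairwise_mergeSort' _ _, fun x hx y hy => ?_⟩
    exact (hlt x (hA.mem_iff.1 hx) y (hB.mem_iff.1 hy)).le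
  have heq : A.mergeSort (· ≤ ·) ++ B.mergeSort (· ≤ ·) = List.range' o n :=
    ((hA.append hB).trans h).eq_of_pairwise' hs List.pairwise_le_range'
  rw [← hn, ← List.range'_append_1] at heq
  obtain ⟨h1, h2⟩ := List.append_inj heq (by simp)
  exact ⟨h1 ▸ hA.symm, h2 ▸ hB.symm⟩

/-- A 231-avoiding list splits at its maximum: every entry to the left is smaller than every entry
to the right, so both sides are arrangements of intervals. -/
lemma exists_word_eq (n o : ℕ) (l : List ℕ) (hp : l.Perm (List.range' o n)) (hl : Av l) :
    ∃ t, word t o = l := by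
  induction n using Nat.strong_induction_on generalizing o l with
  | _ n ih =>
  match n with
  | 0 => exact ⟨.nil, by simpa [word] using hp.symm⟩
  | n + 1 =>
    have hmem : o + n ∈ l := by rw [hp.mem_iff, List.mem_range'_1]; omega
    obtain ⟨A, B, rfl⟩ := List.append_of_mem hmem
    have hp' : (A ++ B).Perm (List.range' o n) := by
      rw [List.range'_concat, one_mul] at hp
      exact (List.perm_middle.symm.trans (hp.trans List.perm_append_comm)).cons_inv
    have hmem' : ∀ x ∈ A ++ B, x < o + n := fun x hx => by
      rw [hp'.mem_iff, List.mem_range'_1] at hx; exact hx.2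
    have hnd : (A ++ B).Nodup := hp'.nodup_iff.2 List.nodup_range'
    have hlt : ∀ x ∈ A, ∀ y ∈ B, x < y := by
      intro x hx y hy
      have hne : x ≠ y := (List.nodup_append.1 hnd).2.2 x hx y hy
      have hxm := hmem' x (by simp [hx])
      have h := hl x (o + n) y (List.Sublist.append (List.singleton_sublist.2 hx)
        ((List.singleton_sublist.2 hy).cons_cons _))
      omega
    obtain ⟨hA, hB⟩ := perm_range'_of_append_lt hp' hlt
    have hn : A.length + B.length = n := by simpa using hp'.length_eq
    obtain ⟨tl, htl⟩ := ih A.length (by omega) o A hA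
      fun a b c h => hl a b c (h.trans (List.sublist_append_left _ _))
    obtain ⟨tr, htr⟩ := ih B.length (by omega) _ B hB
      fun a b c h => hl a b c
        (h.trans ((List.sublist_cons_self _ _).trans (List.sublist_append_right _ _)))
    have nl : tl.numNodes = A.length := by rw [← htl, (word_perm _ _).length_eq]; simp
    have nr : tr.numNodes = B.length := by rw [← htr, (word_perm _ _).length_eq]; simp
    exact ⟨.node () tl tr, by rw [word, nl, nr, htl, htr, add_assoc, hn]⟩

/-! ### Permutations as lists -/

/-- The one-line notation of a permutation. -/
def oneLine {n : ℕ} (σ : Equiv.Perm (Fin n)) : List ℕ := List.ofFn fun i => (σ i : ℕ)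

lemma oneLine_injective {n : ℕ} : Function.Injective (oneLine (n := n)) := by
  intro σ τ h
  have := List.ofFn_injective h
  ext i
  exact congrFun this i

lemma oneLine_nodup {n : ℕ} (σ : Equiv.Perm (Fin n)) : (oneLine σ).Nodup :=
  List.nodup_ofFn.2 (Fin.val_injective.comp σ.injective)

lemma oneLine_perm {n : ℕ} (σ : Equiv.Perm (Fin n)) : (oneLine σ).Perm (List.range' 0 n) := by
  rw [List.perm_ext_iff_of_nodup (oneLine_nodup σ) List.nodup_range']
  intro x
  rw [oneLine, List.mem_ofFn', List.mem_range'_1]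
  constructor
  · rintro ⟨i, rfl⟩; simp
  · intro hx
    exact ⟨σ.symm ⟨x, by omega⟩, by simp⟩

lemma exists_oneLine_eq {n : ℕ} {l : List ℕ} (h : l.Perm (List.range' 0 n)) :
    ∃ σ : Equiv.Perm (Fin n), oneLine σ = l := by
  have hlen : l.length = n := by simpa using h.length_eq
  have hnd : l.Nodup := h.nodup_iff.2 List.nodup_range'
  subst hlen
  have hlt : ∀ i : Fin l.length, l.get i < l.length := fun i => by
    have := h.mem_iff.1 (l.get_mem i)
    rw [List.mem_range'_1] at this
    omega
  let f : Fin l.length → Fin l.length := fun i => ⟨l.get i, hlt i⟩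
  have hf : Function.Injective f := fun i j hij =>
    List.nodup_iff_injective_get.1 hnd (congrArg Fin.val hij)
  exact ⟨Equiv.ofBijective f (Finite.injective_iff_bijective.1 hf), by
    simp [oneLine, f]⟩

lemma sublist_oneLine_iff {n : ℕ} (σ : Equiv.Perm (Fin n)) (s : List ℕ) :
    s.Sublist (oneLine σ) ↔
      ∃ f : Fin s.length → Fin n, StrictMono f ∧ ∀ j, s.get j = (σ (f j) : ℕ) := by
  have hlen : (oneLine σ).length = n := by simp [oneLine]
  rw [List.sublist_iff_exists_fin_orderEmbedding_get_eq]
  constructor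
  · rintro ⟨f, hf⟩
    refine ⟨fun j => Fin.cast hlen (f j), fun i j hij => f.strictMono hij, fun j => ?_⟩
    rw [hf j]; simp [oneLine]; rfl
  · rintro ⟨f, hf, h⟩
    refine ⟨OrderEmbedding.ofStrictMono (fun j => Fin.cast hlen.symm (f j))
      fun i j hij => hf hij, fun j => ?_⟩
    rw [h j]; simp [oneLine]; rfl

lemma av_oneLine_iff {n : ℕ} (σ : Equiv.Perm (Fin n)) : Av (oneLine σ) ↔ Avoids231 σ := by
  constructor
  · rintro h ⟨i, j, k, hij, hjk, h1, h2⟩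
    refine h (σ i) (σ j) (σ k) ((sublist_oneLine_iff σ _).2 ⟨![i, j, k], ?_, ?_⟩) ⟨h1, h2⟩
    · rw [Fin.strictMono_iff_lt_succ]
      intro a; fin_cases a <;> simpa
    · intro a; fin_cases a <;> rfl
  · rintro h a b c hs ⟨h1, h2⟩
    obtain ⟨f, hf, hg⟩ := (sublist_oneLine_iff σ _).1 hs
    have e0 : a = σ (f ⟨0, by simp⟩) := hg ⟨0, by simp⟩
    have e1 : b = σ (f ⟨1, by simp⟩) := hg ⟨1, by simp⟩
    have e2 : c = σ (f ⟨2, by simp⟩) := hg ⟨2, by simp⟩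
    refine h ⟨f ⟨0, by simp⟩, f ⟨1, by simp⟩, f ⟨2, by simp⟩, hf (by simp), hf (by simp), ?_, ?_⟩
    · rw [Fin.lt_def]; omega
    · rw [Fin.lt_def]; omega

lemma altList_iff (l : List ℕ) : AltList l ↔
    ∀ (j : ℕ) (h : j + 2 < l.length), (l[j] < l[j + 1] ↔ ¬ l[j + 1] < l[j + 2]) := by
  match l with
  | [] => simp [AltList]
  | [a] => simp [AltList]
  | [a, b] => simp [AltList]
  | a :: b :: c :: l =>
    rw [altList_cons_cons_cons, altList_iff (b :: c :: l)]
    constructor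
    · rintro ⟨h0, h1⟩ (_ | j) h
      · exact h0
      · exact h1 j (by simp at h ⊢; omega)
    · intro h
      exact ⟨h 0 (by simp), fun j hj => h (j + 1) (by simp at hj ⊢; omega)⟩

lemma exists_isAltSub_iff {n k : ℕ} (σ : Equiv.Perm (Fin n)) :
    (∃ f : Fin k → Fin n, IsAltSub σ f) ↔
      ∃ s : List ℕ, s.Sublist (oneLine σ) ∧ AltList s ∧ s.length = k := by
  constructor
  · rintro ⟨f, hf, halt⟩
    have hlen : (List.ofFn fun j => (σ (f j) : ℕ)).length = k := by simp
    refine ⟨List.ofFn fun j => (σ (f j) : ℕ), (sublist_oneLine_iff _ _).2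
      ⟨fun j => f (Fin.cast hlen j), fun i j hij => hf hij, fun j => by simp; rfl⟩, ?_, hlen⟩
    rw [altList_iff]
    intro j hj
    simpa using halt j (by omega)
  · rintro ⟨s, hs, halt, rfl⟩
    obtain ⟨f, hf, h⟩ := (sublist_oneLine_iff _ _).1 hs
    refine ⟨f, hf, fun j hj => ?_⟩
    have := (altList_iff s).1 halt j hj
    simp only [Fin.lt_def, ← h]
    simpa using this

/-- The longest alternating subsequence is determined up to `2` by the number of branching nodes:
it is essentially a path through all peaks and the valleys between them. -/
lemma altLen_bounds {n : ℕ} (σ : Equiv.Perm (Fin n)) (t : BinaryTree Unit) (ht : t ≠ .nil)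
    (h : oneLine σ = word t 0) :
    2 * branch t + 1 ≤ altLen σ ∧ altLen σ ≤ 2 * branch t + 3 := by
  have hub : ∀ k ∈ {k | ∃ f : Fin k → Fin n, IsAltSub σ f}, k ≤ 2 * branch t + 3 := by
    intro k hk
    obtain ⟨s, hs, halt, rfl⟩ := (exists_isAltSub_iff σ).1 hk
    have h1 := halt.length_le (hs.nodup (oneLine_nodup σ))
    have h2 := peaks_le_of_sublist_word t 0 s (h ▸ hs)
    omega
  obtain ⟨s, h1, h2, h3⟩ := exists_upDown_sublist t ht 0
  have hmem : 2 * branch t + 1 ∈ {k | ∃ f : Fin k → Fin n, IsAltSub σ f} :=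
    (exists_isAltSub_iff σ).2 ⟨s, h ▸ h1, h2.altList, h3⟩
  exact ⟨le_csSup ⟨_, hub⟩ hmem, csSup_le ⟨_, hmem⟩ hub⟩

/-- The 231-avoiding permutations correspond to binary trees. -/
lemma exists_tree {n : ℕ} (σ : Equiv.Perm (Fin n)) (hσ : Avoids231 σ) :
    ∃ t ∈ BinaryTree.treesOfNumNodesEq n, oneLine σ = word t 0 := by
  obtain ⟨t, ht⟩ := exists_word_eq n 0 (oneLine σ) (oneLine_perm σ) ((av_oneLine_iff σ).2 hσ)
  refine ⟨t, BinaryTree.mem_treesOfNumNodesEq.2 ?_, ht.symm⟩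
  have := congrArg List.length ht
  simpa [(word_perm _ _).length_eq, oneLine] using this

lemma exists_perm {n : ℕ} (t : BinaryTree Unit) (ht : t ∈ BinaryTree.treesOfNumNodesEq n) :
    ∃ σ : Equiv.Perm (Fin n), Avoids231 σ ∧ oneLine σ = word t 0 := by
  rw [BinaryTree.mem_treesOfNumNodesEq] at ht
  obtain ⟨σ, hσ⟩ := exists_oneLine_eq (ht ▸ word_perm t 0)
  exact ⟨σ, (av_oneLine_iff σ).1 (hσ ▸ word_av t 0), hσ⟩

lemma ne_nil_of_mem {n : ℕ} {t : BinaryTree Unit}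
    (ht : t ∈ BinaryTree.treesOfNumNodesEq (n + 1)) : t ≠ .nil := by
  rintro rfl
  rw [BinaryTree.mem_treesOfNumNodesEq] at ht
  simp [numNodes] at ht

/-- Lower bound for the number of 231-avoiding permutations whose longest alternating subsequence
has an admissible length. -/
lemma coeff_le_ncard (n k : ℕ) (P : ℕ → Prop)
    (hP : ∀ a, 2 * k + 1 ≤ a → a ≤ 2 * k + 3 → P a) :
    (branchPoly (n + 1)).coeff k ≤
      {σ : Equiv.Perm (Fin (n + 1)) | Avoids231 σ ∧ P (altLen σ)}.ncard := by
  rw [coeff_branchPoly, ← Set.ncard_coe_finset]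
  have h : ∀ t ∈ ((BinaryTree.treesOfNumNodesEq (n + 1)).filter (fun t => branch t = k)),
      ∃ σ : Equiv.Perm (Fin (n + 1)), Avoids231 σ ∧ oneLine σ = word t 0 :=
    fun t ht => exists_perm t (Finset.mem_filter.1 ht).1
  choose! S hS using h
  refine Set.ncard_le_ncard_of_injOn S ?_ ?_ (Set.toFinite _)
  · intro t ht
    obtain ⟨h1, h2⟩ := Finset.mem_filter.1 (Finset.mem_coe.1 ht)
    obtain ⟨b1, b2⟩ := altLen_bounds (S t) t (ne_nil_of_mem h1) (hS t ht).2
    exact ⟨(hS t ht).1, hP _ (h2 ▸ b1) (h2 ▸ b2)⟩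
  · intro t ht t' ht' heq
    refine word_injective 0 ?_
    change word t 0 = word t' 0
    rw [← (hS t ht).2, ← (hS t' ht').2, heq]

/-- Upper bound for the number of 231-avoiding permutations whose longest alternating subsequence
has an admissible length; `K` collects the possible numbers of branching nodes. -/
lemma ncard_le_sum_coeff (n : ℕ) (P : ℕ → Prop) (K : Finset ℕ)
    (hK : ∀ k a, 2 * k ≤ n → 2 * k + 1 ≤ a → a ≤ 2 * k + 3 → P a → k ∈ K) :
    {σ : Equiv.Perm (Fin (n + 1)) | Avoids231 σ ∧ P (altLen σ)}.ncard ≤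
      ∑ k ∈ K, (branchPoly (n + 1)).coeff k := by
  have hT : ∀ σ : Equiv.Perm (Fin (n + 1)), Avoids231 σ →
      ∃ t ∈ BinaryTree.treesOfNumNodesEq (n + 1), oneLine σ = word t 0 := exists_tree
  choose! T hT1 hT2 using hT
  have hle : {σ : Equiv.Perm (Fin (n + 1)) | Avoids231 σ ∧ P (altLen σ)}.ncard ≤
      (((BinaryTree.treesOfNumNodesEq (n + 1)).filter (fun t => branch t ∈ K) :
        Finset (BinaryTree Unit)) : Set (BinaryTree Unit)).ncard := by
    refine Set.ncard_le_ncard_of_injOn T ?_ ?_ (Finset.finite_toSet _)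
    · rintro σ ⟨hσ, hPσ⟩
      obtain ⟨b1, b2⟩ := altLen_bounds σ (T σ) (ne_nil_of_mem (hT1 σ hσ)) (hT2 σ hσ)
      refine Finset.mem_coe.2 (Finset.mem_filter.2 ⟨hT1 σ hσ, hK _ _ ?_ b1 b2 hPσ⟩)
      by_contra hlt
      have hc := coeff_branchPoly_succ n (branch (T σ))
      rw [Nat.choose_eq_zero_of_lt (by omega), zero_mul, zero_mul, coeff_branchPoly] at hc
      have hne : 0 < ((BinaryTree.treesOfNumNodesEq (n + 1)).filter
          (fun t => branch t = branch (T σ))).card :=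
        Finset.card_pos.2 ⟨T σ, Finset.mem_filter.2 ⟨hT1 σ hσ, rfl⟩⟩
      have := Nat.mul_pos hne (pow_pos (show 0 < 4 by norm_num) (branch (T σ)))
      omega
    · rintro σ ⟨hσ, -⟩ τ ⟨hτ, -⟩ heq
      exact oneLine_injective (by rw [hT2 σ hσ, hT2 τ hτ, heq])
  rw [Set.ncard_coe_finset] at hle
  refine hle.trans (le_of_eq ?_)
  rw [Finset.card_eq_sum_card_fiberwise
    (s := (BinaryTree.treesOfNumNodesEq (n + 1)).filter (fun t => branch t ∈ K)) (f := branch)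
    (t := K)
    (fun t ht => (Finset.mem_filter.1 (Finset.mem_coe.1 ht)).2)]
  refine Finset.sum_congr rfl fun k hk => ?_
  rw [coeff_branchPoly, Finset.filter_filter]
  congr 1
  refine Finset.filter_congr fun t _ => ?_
  constructor
  · exact fun h => h.2
  · rintro rfl; exact ⟨hk, rfl⟩

/-! ### Exponential growth rates -/

lemma tendsto_log_succ_div : Tendsto (fun n : ℕ => Real.log ((n : ℝ) + 1) / n) atTop (nhds 0) := by
  have h := Real.tendsto_pow_log_div_mul_add_atTop 1 (-1) 1 one_ne_zero
  have h2 : Tendsto (fun n : ℕ => (n : ℝ) + 1) atTop atTop :=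
    tendsto_atTop_add_const_right _ _ tendsto_natCast_atTop_atTop
  refine (h.comp h2).congr fun n => ?_
  simp

lemma tendsto_const_div (c : ℝ) : Tendsto (fun n : ℕ => c / (n : ℝ)) atTop (nhds 0) :=
  tendsto_const_div_atTop_nhds_zero_nat c

/-- Stirling's formula to first exponential order. -/
lemma tendsto_log_factorial :
    Tendsto (fun n : ℕ => Real.log (n.factorial : ℝ) / n - Real.log n + 1) atTop (nhds 0) := by
  have h1 : Tendsto (fun n : ℕ => Real.log (Stirling.stirlingSeq n) * (1 / (n : ℝ))) atTop
      (nhds (Real.log (√π) * 0)) :=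
    (Stirling.tendsto_stirlingSeq_sqrt_pi.log (by positivity)).mul (tendsto_const_div 1)
  have h2 : Tendsto (fun n : ℕ => Real.log (2 * n : ℝ) / n) atTop (nhds 0) := by
    have h := (Real.tendsto_pow_log_div_mul_add_atTop (1 / 2) 0 1 (by norm_num)).comp
      (tendsto_natCast_atTop_atTop.const_mul_atTop (zero_lt_two (α := ℝ)))
    refine h.congr fun n => ?_
    simp
  have h3 := h1.add (h2.const_mul (1 / 2))
  simp only [mul_zero, add_zero] at h3
  refine h3.congr' ?_
  filter_upwards [eventually_gt_atTop 0] with n hn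
  have hn' : (n : ℝ) ≠ 0 := by positivity
  rw [Stirling.log_stirlingSeq_formula, Real.log_div hn' (Real.exp_pos 1).ne', Real.log_exp]
  field_simp
  ring

lemma tendsto_log_choose {x : ℝ} (hx0 : 0 < x) (hx1 : x < 1) {m : ℕ → ℕ}
    (hm : Tendsto (fun N : ℕ => (m N : ℝ) / N) atTop (nhds x)) :
    Tendsto (fun N : ℕ => Real.log (N.choose (m N) : ℝ) / N) atTop
      (nhds (-(x * Real.log x + (1 - x) * Real.log (1 - x)))) := by
  set e : ℕ → ℝ := fun n => Real.log (n.factorial : ℝ) / n - Real.log n + 1 with he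
  have he0 : Tendsto e atTop (nhds 0) := tendsto_log_factorial
  have hlt : ∀ᶠ N : ℕ in atTop, m N < N := by
    filter_upwards [hm.eventually_lt_const hx1, eventually_gt_atTop 0] with N h hN
    rw [div_lt_one (by positivity)] at h
    exact_mod_cast h
  have hpos : ∀ᶠ N : ℕ in atTop, 0 < m N := by
    filter_upwards [hm.eventually_const_lt hx0] with N h
    by_contra h0
    simp [Nat.eq_zero_of_not_pos h0] at h
  have hm' : Tendsto (fun N : ℕ => ((N - m N : ℕ) : ℝ) / N) atTop (nhds (1 - x)) := by
    refine (tendsto_const_nhds.sub hm).congr' ?_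
    filter_upwards [hlt] with N h
    have : (N : ℝ) ≠ 0 := by have : 0 < N := by omega
                             positivity
    rw [Nat.cast_sub h.le]; field_simp
  have atTop_of {u : ℕ → ℕ} {y : ℝ} (hy : 0 < y)
      (hu : Tendsto (fun N : ℕ => (u N : ℝ) / N) atTop (nhds y)) : Tendsto u atTop atTop := by
    rw [← tendsto_natCast_atTop_iff (R := ℝ)]
    refine (hu.pos_mul_atTop hy tendsto_natCast_atTop_atTop).congr' ?_
    filter_upwards [eventually_gt_atTop 0] with N hN
    have : (N : ℝ) ≠ 0 := by positivity
    field_simp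
  have l1 := hm.mul (he0.comp (atTop_of hx0 hm))
  have l2 := hm'.mul (he0.comp (atTop_of (sub_pos.2 hx1) hm'))
  have l3 := (Real.continuous_mul_log.tendsto x).comp hm
  have l4 := (Real.continuous_mul_log.tendsto (1 - x)).comp hm'
  have l := (((he0.sub l1).sub l2).sub l3).sub l4
  rw [show -(x * Real.log x + (1 - x) * Real.log (1 - x)) =
    0 - x * 0 - (1 - x) * 0 - x * Real.log x - (1 - x) * Real.log (1 - x) by ring]
  refine l.congr' ?_
  filter_upwards [hlt, hpos] with N h1 h0
  have hN : (N : ℝ) ≠ 0 := by have : 0 < N := by omega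
                              positivity
  have ha : (m N : ℝ) ≠ 0 := by positivity
  have hb : ((N - m N : ℕ) : ℝ) ≠ 0 := by
    have : 0 < N - m N := by omega
    positivity
  have hab : (N : ℝ) = (m N : ℝ) + ((N - m N : ℕ) : ℝ) := by
    rw [Nat.cast_sub h1.le]; ring
  simp only [Function.comp, he]
  rw [Nat.choose_eq_factorial_div_factorial h1.le,
    Nat.cast_div (Nat.factorial_mul_factorial_dvd_factorial h1.le) (by positivity), Nat.cast_mul,
    Real.log_div (Nat.cast_ne_zero.2 (Nat.factorial_ne_zero N)) (by positivity),
    Real.log_mul (by positivity) (by positivity), Real.log_div ha hN, Real.log_div hb hN]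
  generalize ((N - m N : ℕ) : ℝ) = b at *
  generalize (m N : ℝ) = a at *
  field_simp
  rw [hab]
  ring

lemma catalan_le_four_pow (k : ℕ) : catalan k ≤ 4 ^ k := by
  rw [catalan_eq_centralBinom_div]
  exact (Nat.div_le_self _ _).trans (Nat.centralBinom_le_four_pow k)

lemma four_pow_le_catalan (k : ℕ) : 4 ^ k ≤ 2 * (k + 1) ^ 2 * catalan k := by
  rcases Nat.eq_zero_or_pos k with rfl | hk
  · simp
  · have h1 := Nat.four_pow_le_two_mul_self_mul_centralBinom k hk
    rw [← succ_mul_catalan_eq_centralBinom] at h1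
    refine h1.trans ?_
    nlinarith [Nat.zero_le ((k + 1) * catalan k)]

lemma catalan_pos (k : ℕ) : 0 < catalan k := by
  have := four_pow_le_catalan k
  by_contra h
  rw [Nat.eq_zero_of_not_pos h] at this
  have := pow_pos (show 0 < 4 by norm_num) k
  omega

lemma tendsto_log_catalan :
    Tendsto (fun n : ℕ => Real.log (catalan n : ℝ) / n) atTop (nhds (Real.log 4)) := by
  have lo : Tendsto (fun n : ℕ => Real.log 4 - Real.log 2 / n - 2 * (Real.log ((n : ℝ) + 1) / n))
      atTop (nhds (Real.log 4 - 0 - 2 * 0)) :=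
    ((tendsto_const_nhds.sub (tendsto_const_div _))).sub (tendsto_log_succ_div.const_mul 2)
  simp only [sub_zero, mul_zero] at lo
  refine tendsto_of_tendsto_of_tendsto_of_le_of_le' lo tendsto_const_nhds ?_ ?_
  · filter_upwards [eventually_gt_atTop 0] with n hn
    have hc : (0 : ℝ) < catalan n := by exact_mod_cast catalan_pos n
    have h : (4 : ℝ) ^ n ≤ 2 * ((n : ℝ) + 1) ^ 2 * catalan n := by
      exact_mod_cast four_pow_le_catalan n
    have h2 := Real.log_le_log (by positivity) h
    rw [Real.log_mul (by positivity) hc.ne', Real.log_mul (by positivity) (by positivity),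
      Real.log_pow, Real.log_pow] at h2
    have hn' : (0 : ℝ) < n := by positivity
    rw [le_div_iff₀ hn']
    field_simp
    push_cast at h2
    linarith
  · filter_upwards [eventually_gt_atTop 0] with n hn
    have hc : (0 : ℝ) < catalan n := by exact_mod_cast catalan_pos n
    have h : (catalan n : ℝ) ≤ 4 ^ n := by exact_mod_cast catalan_le_four_pow n
    have h2 := Real.log_le_log hc h
    rw [Real.log_pow] at h2
    rw [div_le_iff₀ (by positivity)]
    linarith

/-- If `A N` agrees with `2 ^ N * N.choose (m N)`, `m N / N → x`, up to subexponential factors, then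
`A N / catalan (N + 1)` has exponential rate `log 2 + H(x) - log 4 = H(x) - log 2`, where
`H(x) = -(x log x + (1 - x) log (1 - x))`. -/
lemma tendsto_rate {x : ℝ} (hx0 : 0 < x) (hx1 : x < 1) (A m : ℕ → ℕ) (D : ℝ)
    (hm : Tendsto (fun N : ℕ => (m N : ℝ) / N) atTop (nhds x))
    (lo : ∀ᶠ N : ℕ in atTop, N.choose (m N) * 2 ^ N ≤ 2 * (N + 1) ^ 2 * A N)
    (hi : ∀ᶠ N : ℕ in atTop, (A N : ℝ) ≤ 2 ^ N *
      Real.exp (D + N * -(x * Real.log x + (1 - x) * Real.log (1 - x)))) :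
    Tendsto (fun N : ℕ => 1 / ((N + 1 : ℕ) : ℝ) *
        Real.log ((A N : ℝ) / (catalan (N + 1) : ℝ))) atTop
      (nhds (-(x * Real.log x + (1 - x) * Real.log (1 - x) + Real.log 2))) := by
  set h := -(x * Real.log x + (1 - x) * Real.log (1 - x)) with hh
  have hchoose := tendsto_log_choose hx0 hx1 hm
  have hApos : ∀ᶠ N : ℕ in atTop, 0 < N.choose (m N) ∧ 0 < A N := by
    filter_upwards [hm.eventually_lt_const hx1, eventually_gt_atTop 0, lo] with N h hN hlo
    rw [div_lt_one (by positivity)] at h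
    have h' : m N < N := by exact_mod_cast h
    have hc := Nat.choose_pos h'.le
    refine ⟨hc, Nat.pos_of_ne_zero fun h0 => ?_⟩
    rw [h0, mul_zero] at hlo
    have : 0 < N.choose (m N) * 2 ^ N := by positivity
    omega
  have hA : Tendsto (fun N : ℕ => Real.log (A N : ℝ) / N) atTop (nhds (h + Real.log 2)) := by
    have l := ((hchoose.add_const (Real.log 2)).sub (tendsto_const_div (Real.log 2))).sub
      (tendsto_log_succ_div.const_mul 2)
    have u := (tendsto_const_div D).add_const (h + Real.log 2)
    simp only [sub_zero, mul_zero, zero_add] at l u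
    refine tendsto_of_tendsto_of_tendsto_of_le_of_le' l u ?_ ?_
    · filter_upwards [hApos, lo, eventually_gt_atTop 0] with N hp hlo hN
      have hN' : (0 : ℝ) < N := by positivity
      have hc : (0 : ℝ) < N.choose (m N) := by exact_mod_cast hp.1
      have ha : (0 : ℝ) < A N := by exact_mod_cast hp.2
      have h1 : (N.choose (m N) : ℝ) * 2 ^ N ≤ 2 * ((N : ℝ) + 1) ^ 2 * A N := by exact_mod_cast hlo
      have h2 := Real.log_le_log (by positivity) h1
      rw [Real.log_mul (by positivity) ha.ne', Real.log_mul hc.ne' (by positivity),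
        Real.log_mul two_ne_zero (by positivity), Real.log_pow, Real.log_pow] at h2
      rw [le_div_iff₀ hN']
      field_simp
      push_cast at h2
      linarith
    · filter_upwards [hApos, hi, eventually_gt_atTop 0] with N hp hhi hN
      have hN' : (0 : ℝ) < N := by positivity
      have ha : (0 : ℝ) < A N := by exact_mod_cast hp.2
      have h2 := Real.log_le_log ha hhi
      rw [Real.log_mul (by positivity) (by positivity), Real.log_pow, Real.log_exp] at h2
      rw [div_le_iff₀ hN']
      field_simp
      linarith
  have hcat := (tendsto_add_atTop_iff_nat 1).2 tendsto_log_catalan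
  have hfin := (hA.mul (tendsto_natCast_div_add_atTop (1 : ℝ))).sub hcat
  have e4 : Real.log 4 = 2 * Real.log 2 := by
    rw [show (4 : ℝ) = 2 ^ 2 by norm_num, Real.log_pow]; norm_num
  rw [show -(x * Real.log x + (1 - x) * Real.log (1 - x) + Real.log 2) =
    (h + Real.log 2) * 1 - Real.log 4 by rw [e4, hh]; ring]
  refine hfin.congr' ?_
  filter_upwards [hApos, eventually_gt_atTop 0] with N hp hN
  have ha : (A N : ℝ) ≠ 0 := by exact_mod_cast hp.2.ne'
  have hc : (catalan (N + 1) : ℝ) ≠ 0 := by exact_mod_cast (catalan_pos (N + 1)).ne'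
  have hN' : (N : ℝ) ≠ 0 := by positivity
  rw [Real.log_div ha hc]
  push_cast
  field_simp

lemma choose_mul_two_pow_le (N k : ℕ) :
    N.choose (2 * k) * 2 ^ N ≤ 2 * (N + 1) ^ 2 * (branchPoly (N + 1)).coeff k := by
  rcases lt_or_ge N (2 * k) with hk | hk
  · simp [Nat.choose_eq_zero_of_lt hk]
  · have h1 := coeff_branchPoly_succ N k
    refine Nat.le_of_mul_le_mul_right ?_ (catalan_pos k)
    calc N.choose (2 * k) * 2 ^ N * catalan k
        = (branchPoly (N + 1)).coeff k * 4 ^ k := h1.symm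
      _ ≤ (branchPoly (N + 1)).coeff k * (2 * (k + 1) ^ 2 * catalan k) :=
          Nat.mul_le_mul_left _ (four_pow_le_catalan k)
      _ ≤ (branchPoly (N + 1)).coeff k * (2 * (N + 1) ^ 2 * catalan k) := by
          gcongr; omega
      _ = _ := by ring

lemma coeff_le_choose_mul (N k : ℕ) :
    (branchPoly (N + 1)).coeff k ≤ N.choose (2 * k) * 2 ^ N := by
  refine Nat.le_of_mul_le_mul_right ?_ (pow_pos (show 0 < 4 by norm_num) k)
  rw [coeff_branchPoly_succ]
  exact Nat.mul_le_mul_left _ (catalan_le_four_pow k)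

/-- Chernoff bound: each `N.choose (2 * k)` is compared with a binomial probability with success
parameter `x`. The hypothesis on `D` says that `2 * k` lies, up to a bounded error, on the side of
`N * x` away from `N / 2`. -/
lemma sum_coeff_le {x : ℝ} (hx0 : 0 < x) (hx1 : x < 1) (N : ℕ) (K : Finset ℕ) (D : ℝ)
    (hK : ∀ k ∈ K, 2 * k ≤ N ∧ -D ≤ (2 * k - N * x) * (Real.log x - Real.log (1 - x))) :
    ((∑ k ∈ K, (branchPoly (N + 1)).coeff k : ℕ) : ℝ) ≤ 2 ^ N *
      Real.exp (D + N * -(x * Real.log x + (1 - x) * Real.log (1 - x))) := by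
  have hy : 0 < 1 - x := sub_pos.2 hx1
  set E := Real.exp (D + N * -(x * Real.log x + (1 - x) * Real.log (1 - x))) with hE
  have hterm : ∀ k ∈ K, ((branchPoly (N + 1)).coeff k : ℝ) ≤
      2 ^ N * E * (x ^ (2 * k) * (1 - x) ^ (N - 2 * k) * (N.choose (2 * k) : ℝ)) := by
    intro k hk
    obtain ⟨h1, h2⟩ := hK k hk
    have hw : 1 ≤ E * (x ^ (2 * k) * (1 - x) ^ (N - 2 * k)) := by
      have e : x ^ (2 * k) * (1 - x) ^ (N - 2 * k) =
          Real.exp (2 * k * Real.log x + (N - 2 * k) * Real.log (1 - x)) := by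
        rw [Real.exp_add, ← Real.rpow_natCast, ← Real.rpow_natCast, Real.rpow_def_of_pos hx0,
          Real.rpow_def_of_pos hy, Nat.cast_sub h1]
        push_cast
        ring_nf
      rw [e, hE, ← Real.exp_add]
      refine Real.one_le_exp ?_
      linarith
    have h3 : ((branchPoly (N + 1)).coeff k : ℝ) ≤ N.choose (2 * k) * 2 ^ N := by
      exact_mod_cast coeff_le_choose_mul N k
    calc ((branchPoly (N + 1)).coeff k : ℝ) ≤ (N.choose (2 * k) * 2 ^ N) * 1 := by simpa using h3
      _ ≤ (N.choose (2 * k) * 2 ^ N) * (E * (x ^ (2 * k) * (1 - x) ^ (N - 2 * k))) := by gcongr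
      _ = _ := by ring
  push_cast
  refine (Finset.sum_le_sum hterm).trans ?_
  rw [← Finset.mul_sum]
  refine mul_le_of_le_one_right (by positivity) ?_
  calc _ = ∑ j ∈ K.image (2 * ·), x ^ j * (1 - x) ^ (N - j) * (N.choose j : ℝ) := by
        rw [Finset.sum_image (fun a _ b _ h => by simpa using h)]
    _ ≤ ∑ j ∈ Finset.range (N + 1), x ^ j * (1 - x) ^ (N - j) * (N.choose j : ℝ) := by
        refine Finset.sum_le_sum_of_subset_of_nonneg ?_ fun j _ _ => by positivity
        intro j hj
        obtain ⟨k, hk, rfl⟩ := Finset.mem_image.1 hj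
        have := (hK k hk).1
        simp; omega
    _ = 1 := by rw [← add_pow]; simp

lemma tendsto_div_of_abs_sub_le {x C : ℝ} {m : ℕ → ℕ}
    (h : ∀ᶠ N : ℕ in atTop, |(m N : ℝ) - N * x| ≤ C) :
    Tendsto (fun N : ℕ => (m N : ℝ) / N) atTop (nhds x) := by
  rw [tendsto_iff_norm_sub_tendsto_zero]
  refine squeeze_zero' (Eventually.of_forall fun _ => norm_nonneg _) ?_ (tendsto_const_div C)
  filter_upwards [h, eventually_gt_atTop 0] with N h hN
  have hN' : (0 : ℝ) < N := by positivity
  rw [Real.norm_eq_abs, show (m N : ℝ) / N - x = ((m N : ℝ) - N * x) / N by field_simp, abs_div,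
    abs_of_pos hN']
  gcongr

/-- Large deviations for the longest alternating subsequence under the uniform 231-avoiding
measure, with rate function `I(x) = x log x + (1-x) log(1-x) + log 2`. -/
theorem altLen_large_deviations :
    (∀ x : ℝ, 1 / 2 ≤ x → x < 1 →
      Filter.Tendsto (fun n : ℕ => (1 / (n : ℝ)) * Real.log
          (({σ : Equiv.Perm (Fin n) | Avoids231 σ ∧ (n : ℝ) * x ≤ (altLen σ : ℝ)}.ncard : ℝ) /
            (catalan n : ℝ)))
        Filter.atTop
        (nhds (-(x * Real.log x + (1 - x) * Real.log (1 - x) + Real.log 2)))) ∧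
    (∀ x : ℝ, 0 < x → x ≤ 1 / 2 →
      Filter.Tendsto (fun n : ℕ => (1 / (n : ℝ)) * Real.log
          (({σ : Equiv.Perm (Fin n) | Avoids231 σ ∧ (altLen σ : ℝ) ≤ (n : ℝ) * x}.ncard : ℝ) /
            (catalan n : ℝ)))
        Filter.atTop
        (nhds (-(x * Real.log x + (1 - x) * Real.log (1 - x) + Real.log 2)))) := by
  constructor
  · intro x hx hx1
    have hx0 : 0 < x := by linarith
    have hL : 0 ≤ Real.log x - Real.log (1 - x) :=
      sub_nonneg.2 (Real.log_le_log (by linarith) (by linarith))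
    -- `n = N + 1`; the least `k` with `2 * k ≥ n * x` guarantees `altLen ≥ 2 * k + 1 ≥ n * x`.
    rw [← tendsto_add_atTop_iff_nat 1]
    refine tendsto_rate hx0 hx1 _ (fun N => 2 * ⌈((N + 1 : ℕ) : ℝ) * x / 2⌉₊)
      (3 * (Real.log x - Real.log (1 - x))) (tendsto_div_of_abs_sub_le (C := 5) ?_) ?_ ?_
    · refine Eventually.of_forall fun N => ?_
      have h1 := Nat.le_ceil (((N + 1 : ℕ) : ℝ) * x / 2)
      have h2 := Nat.ceil_lt_add_one (show 0 ≤ ((N + 1 : ℕ) : ℝ) * x / 2 by positivity)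
      push_cast at h1 h2 ⊢
      rw [abs_le]
      constructor <;> linarith
    · refine Eventually.of_forall fun N => (choose_mul_two_pow_le N _).trans ?_
      refine Nat.mul_le_mul_left _ (coeff_le_ncard N _
        (fun a => ((N + 1 : ℕ) : ℝ) * x ≤ (a : ℝ)) fun a ha _ => ?_)
      have h1 := Nat.le_ceil (((N + 1 : ℕ) : ℝ) * x / 2)
      have h2 : (2 : ℝ) * (⌈((N + 1 : ℕ) : ℝ) * x / 2⌉₊ : ℝ) + 1 ≤ a := by exact_mod_cast ha
      linarith
    · refine Eventually.of_forall fun N => ?_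
      refine le_trans (Nat.cast_le.2 (ncard_le_sum_coeff N
        (fun a => ((N + 1 : ℕ) : ℝ) * x ≤ (a : ℝ))
        ((Finset.range (N + 1)).filter fun k => 2 * k ≤ N ∧ (N : ℝ) * x - 3 ≤ 2 * k) ?_))
        (sum_coeff_le hx0 hx1 N _ _ ?_)
      · intro k a hk _ ha hP
        have ha' : (a : ℝ) ≤ 2 * k + 3 := by exact_mod_cast ha
        push_cast at hP
        refine Finset.mem_filter.2 ⟨Finset.mem_range.2 (by omega), hk, by linarith⟩
      · intro k hk
        obtain ⟨-, h1, h2⟩ := Finset.mem_filter.1 hk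
        exact ⟨h1, by nlinarith⟩
  · intro x hx0 hx
    have hx1 : x < 1 := by linarith
    have hL : 0 ≤ Real.log (1 - x) - Real.log x :=
      sub_nonneg.2 (Real.log_le_log (by linarith) (by linarith))
    have hlarge : ∀ᶠ N : ℕ in atTop, 3 ≤ ((N + 1 : ℕ) : ℝ) * x := by
      filter_upwards [(tendsto_natCast_atTop_atTop.atTop_mul_const hx0).eventually_ge_atTop
        (3 : ℝ)] with N hN
      push_cast
      linarith
    -- `n = N + 1`; the largest `k` with `2 * k + 3 ≤ n * x` guarantees `altLen ≤ n * x`. The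
    -- truncation of the floor at `0` is harmless since `n * x ≥ 3` for large `n`.
    rw [← tendsto_add_atTop_iff_nat 1]
    refine tendsto_rate hx0 hx1 _ (fun N => 2 * ⌊(((N + 1 : ℕ) : ℝ) * x - 3) / 2⌋₊)
      (3 * (Real.log (1 - x) - Real.log x)) (tendsto_div_of_abs_sub_le (C := 5) ?_) ?_ ?_
    · filter_upwards [hlarge] with N hN
      have h1 := Nat.floor_le (show 0 ≤ (((N + 1 : ℕ) : ℝ) * x - 3) / 2 by linarith)
      have h2 := Nat.lt_floor_add_one ((((N + 1 : ℕ) : ℝ) * x - 3) / 2)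
      push_cast at h1 h2 ⊢
      rw [abs_le]
      constructor <;> linarith
    · filter_upwards [hlarge] with N hN
      refine (choose_mul_two_pow_le N _).trans ?_
      refine Nat.mul_le_mul_left _ (coeff_le_ncard N _
        (fun a => (a : ℝ) ≤ ((N + 1 : ℕ) : ℝ) * x) fun a _ ha => ?_)
      have h1 := Nat.floor_le (show 0 ≤ (((N + 1 : ℕ) : ℝ) * x - 3) / 2 by linarith)
      have h2 : (a : ℝ) ≤ 2 * (⌊(((N + 1 : ℕ) : ℝ) * x - 3) / 2⌋₊ : ℝ) + 3 := by exact_mod_cast ha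
      linarith
    · refine Eventually.of_forall fun N => ?_
      refine le_trans (Nat.cast_le.2 (ncard_le_sum_coeff N
        (fun a => (a : ℝ) ≤ ((N + 1 : ℕ) : ℝ) * x)
        ((Finset.range (N + 1)).filter fun k => 2 * k ≤ N ∧ (2 : ℝ) * k ≤ N * x + 3) ?_))
        (sum_coeff_le hx0 hx1 N _ _ ?_)
      · intro k a hk ha _ hP
        have ha' : (2 : ℝ) * k + 1 ≤ a := by exact_mod_cast ha
        push_cast at hP
        refine Finset.mem_filter.2 ⟨Finset.mem_range.2 (by omega), hk, by linarith⟩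
      · intro k hk
        obtain ⟨-, h1, h2⟩ := Finset.mem_filter.1 hk
        exact ⟨h1, by nlinarith⟩
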